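/- Fix integers 1 ≤ p < n. The set of products D_{I₁}⋯D_{I_k} such that the rectangular Young tableau of height p with columns I₁,…,I_k is PBW-semistandard (i.e. every I_j is a PBW tuple and I₁ ⪯_pbw … ⪯_pbw I_k) is a ℂ-vector-space basis of the Plücker algebra 𝒫. -/

import Mathlib

open scoped Classical

noncomputable section

open MvPolynomial

/-- The Plücker minor `D_I`: the determinant of the `p×p` matrix whose `j`-th column
is the `α j`-th column of the generic `p×n` matrix of variables `z_{i,j}`. -/
def Dmin (p n : ℕ) (α : Fin p → Fin n) : MvPolynomial (Fin p × Fin n) ℂ :=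
  (Matrix.of fun i j : Fin p => (X (i, α j) : MvPolynomial (Fin p × Fin n) ℂ)).det

/-- The Plücker algebra `𝒫`: the subalgebra generated by all minors `D_I`. -/
def Pluecker (p n : ℕ) : Subalgebra ℂ (MvPolynomial (Fin p × Fin n) ℂ) :=
  Algebra.adjoin ℂ (Set.range (Dmin p n))

/-- `α` is a PBW tuple (0-indexed version): the entries are pairwise distinct, entries
`< p` stand at the position equal to their value, and entries `≥ p` appear in
decreasing order. -/
def IsPBW (p n : ℕ) (α : Fin p → Fin n) : Prop :=
  Function.Injective α ∧ (∀ j : Fin p, (α j : ℕ) < p → (α j : ℕ) = (j : ℕ)) ∧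
    ∀ j k : Fin p, p ≤ (α k : ℕ) → (α k : ℕ) < (α j : ℕ) → j < k

/-- The position of the variable `z_{i,j}` in the PBW ordering of the variables: first
by row, then cyclically within the `i`-th row starting with `z_{i,i}`. -/
def rankPBW (p n : ℕ) (x : Fin p × Fin n) : ℕ :=
  (x.1 : ℕ) * n + ((x.2 : ℕ) + n - (x.1 : ℕ)) % n

/-- The order `⪯_pbw` on PBW tuples: `I ⪯_pbw I'` iff for every `k` there is `l ≥ k`
with `α'_l ≥ α_k`. -/
def pbwLeFin (p n : ℕ) (α α' : Fin p → Fin n) : Prop :=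
  ∀ a : Fin p, ∃ b : Fin p, a ≤ b ∧ (α a : ℕ) ≤ (α' b : ℕ)

/-- The set of products `D_{I₁}⋯D_{I_k}` over PBW-semistandard Young tableaux, i.e.
over tuples of PBW columns with `I₁ ⪯_pbw … ⪯_pbw I_k`. -/
def pbwProducts (p n : ℕ) : Set (MvPolynomial (Fin p × Fin n) ℂ) :=
  {f | ∃ (k : ℕ) (I : Fin k → (Fin p → Fin n)),
    (∀ i, IsPBW p n (I i)) ∧
    (∀ i j : Fin k, i ≤ j → pbwLeFin p n (I i) (I j)) ∧
    f = ∏ i : Fin k, Dmin p n (I i)}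

/-!
For a suitable lexicographic order of the monomials, the leading term of the minor of a PBW tuple
`α` is its diagonal term `z_{1,α₁} ⋯ z_{p,α_p}`. A PBW-semistandard tableau can be recovered from
the product of the diagonal terms of its columns, row by row from the bottom and within each row
from the largest entry down. Hence the products in question have distinct leading monomials and are
linearly independent.

That they span is a matter of counting. The classical exchange relations straighten every product
of `k` minors into products over ordinary semistandard tableaux with `k` columns. The order `⪯_pbw`
compares the suffix maxima `k ↦ max_{l ≥ k} α_l`, and every weakly decreasing sequence with values
at least `p` (`p - 1` when counting from `0`) is the sequence of suffix maxima of a PBW tuple.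
Reading an increasing tuple backwards and shifting it produces such a sequence, so there are at
least as many PBW-semistandard tableaux as semistandard ones.
-/

section Exchange

open Equiv

variable {ι β γ : Type*} {s t : Finset ι}

/-- The first of the two families obtained from `v` and `w` when the entries of `v` in the positions
`s` and those of `w` in the positions `t` are pooled and redistributed according to `σ`. -/
def exchangeFst (v w : ι → β) (σ : Perm (s ⊕ t)) : ι → β := fun i =>
  if h : i ∈ s then Sum.elim (v ∘ (↑)) (w ∘ (↑)) (σ (Sum.inl ⟨i, h⟩)) else v i

/-- The second of the two families obtained from `v` and `w` when the entries of `v` in the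
positions `s` and those of `w` in the positions `t` are pooled and redistributed according to
`σ`. -/
def exchangeSnd (v w : ι → β) (σ : Perm (s ⊕ t)) : ι → β := fun i =>
  if h : i ∈ t then Sum.elim (v ∘ (↑)) (w ∘ (↑)) (σ (Sum.inr ⟨i, h⟩)) else w i

theorem exchangeFst_one (v w : ι → β) : exchangeFst v w (1 : Perm (s ⊕ t)) = v := by
  ext i
  simp [exchangeFst]

theorem exchangeSnd_one (v w : ι → β) : exchangeSnd v w (1 : Perm (s ⊕ t)) = w := by
  ext i
  simp [exchangeSnd]

theorem sumElim_comp_apply (c : β → γ) (v w : ι → β) (z : s ⊕ t) :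
    Sum.elim ((c ∘ v) ∘ (↑)) ((c ∘ w) ∘ (↑)) z = c (Sum.elim (v ∘ (↑)) (w ∘ (↑)) z) := by
  cases z <;> rfl

theorem exchangeFst_comp (c : β → γ) (v w : ι → β) (σ : Perm (s ⊕ t)) :
    exchangeFst (c ∘ v) (c ∘ w) σ = c ∘ exchangeFst v w σ := by
  ext i
  simp only [exchangeFst, Function.comp_apply, apply_dite c, sumElim_comp_apply]

theorem exchangeSnd_comp (c : β → γ) (v w : ι → β) (σ : Perm (s ⊕ t)) :
    exchangeSnd (c ∘ v) (c ∘ w) σ = c ∘ exchangeSnd v w σ := by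
  ext i
  simp only [exchangeSnd, Function.comp_apply, apply_dite c, sumElim_comp_apply]

section Sum

variable {Γ : Type*} [Fintype ι]

theorem sum_exchangeFst [AddCommMonoid Γ] (v w : ι → Γ) (σ : Perm (s ⊕ t)) :
    ∑ i, exchangeFst v w σ i =
      ∑ x, Sum.elim (v ∘ (↑)) (w ∘ (↑)) (σ (Sum.inl x)) + ∑ i ∈ sᶜ, v i := by
  rw [← Finset.sum_add_sum_compl s, ← Finset.sum_coe_sort]
  congr 1
  · exact Finset.sum_congr rfl fun x _ => dif_pos x.2
  · exact Finset.sum_congr rfl fun i hi => dif_neg (Finset.mem_compl.1 hi)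

theorem sum_exchangeSnd [AddCommMonoid Γ] (v w : ι → Γ) (σ : Perm (s ⊕ t)) :
    ∑ i, exchangeSnd v w σ i =
      ∑ y, Sum.elim (v ∘ (↑)) (w ∘ (↑)) (σ (Sum.inr y)) + ∑ i ∈ tᶜ, w i := by
  rw [← Finset.sum_add_sum_compl t, ← Finset.sum_coe_sort]
  congr 1
  · exact Finset.sum_congr rfl fun y _ => dif_pos y.2
  · exact Finset.sum_congr rfl fun i hi => dif_neg (Finset.mem_compl.1 hi)

theorem sum_exchangeFst_add_sum_exchangeSnd [AddCommMonoid Γ] (v w : ι → Γ)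
    (σ : Perm (s ⊕ t)) :
    ∑ i, exchangeFst v w σ i + ∑ i, exchangeSnd v w σ i = ∑ i, v i + ∑ i, w i := by
  let u : s ⊕ t → Γ := Sum.elim (v ∘ (↑)) (w ∘ (↑))
  have pool : ∑ x, u (σ (Sum.inl x)) + ∑ y, u (σ (Sum.inr y)) =
      ∑ x : s, v x + ∑ y : t, w y := by
    rw [← Fintype.sum_sum_type fun z => u (σ z), Equiv.sum_comp σ u, Fintype.sum_sum_type]
    rfl
  rw [sum_exchangeFst, sum_exchangeSnd, add_add_add_comm, pool, add_add_add_comm,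
    Finset.sum_coe_sort, Finset.sum_coe_sort, Finset.sum_add_sum_compl, Finset.sum_add_sum_compl]

theorem sum_lt_sum_of_card_eq [AddCommMonoid Γ] [LinearOrder Γ] [IsOrderedCancelAddMonoid Γ]
    {κ : Type*} {A B : Finset κ} {u : κ → Γ} (hcard : A.card = B.card) (hne : A ≠ B)
    (h : ∀ a ∈ A \ B, ∀ b ∈ B \ A, u a < u b) : ∑ a ∈ A, u a < ∑ b ∈ B, u b := by
  have hAB : (A \ B).Nonempty := Finset.sdiff_nonempty.2 fun hsub =>
    hne (Finset.eq_of_subset_of_card_le hsub hcard.ge)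
  have hBA : (B \ A).Nonempty := Finset.sdiff_nonempty.2 fun hsub =>
    hne (Finset.eq_of_subset_of_card_le hsub hcard.le).symm
  obtain ⟨a, ha, hmax⟩ := Finset.exists_max_image (A \ B) u hAB
  rw [← Finset.sum_sdiff_lt_sum_sdiff]
  calc ∑ x ∈ A \ B, u x ≤ (A \ B).card • u a := Finset.sum_le_card_nsmul _ _ _ hmax
    _ = ∑ _y ∈ B \ A, u a := by rw [Finset.card_sdiff_comm hcard, Finset.sum_const]
    _ < ∑ y ∈ B \ A, u y := Finset.sum_lt_sum_of_nonempty hBA fun b hb => h a ha b hb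

theorem sum_exchangeSnd_lt [AddCommMonoid Γ] [LinearOrder Γ] [IsOrderedCancelAddMonoid Γ]
    {v w : ι → Γ} (h : ∀ i ∈ s, ∀ j ∈ t, v i < w j) {σ : Perm (s ⊕ t)}
    (hσ : σ ∉ (Perm.sumCongrHom s t).range) : ∑ i, exchangeSnd v w σ i < ∑ i, w i := by
  let u : s ⊕ t → Γ := Sum.elim (v ∘ (↑)) (w ∘ (↑))
  let right : Finset (s ⊕ t) := Finset.univ.map Function.Embedding.inr
  have hmoved : right.map σ.toEmbedding ≠ right := by
    intro hfix
    refine hσ (Perm.mem_sumCongrHom_range_of_perm_mapsTo_inl ?_)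
    rintro _ ⟨x, rfl⟩
    rcases hx : σ (Sum.inl x) with x' | y
    · exact ⟨x', rfl⟩
    · have : Sum.inr y ∈ right.map σ.toEmbedding := hfix.symm ▸ by simp [right]
      simp [right, ← hx] at this
  have hlt : ∑ z ∈ right.map σ.toEmbedding, u z < ∑ z ∈ right, u z := by
    refine sum_lt_sum_of_card_eq (Finset.card_map _) hmoved ?_
    rintro (x | y) hz (x' | y') hz'
    · simp [right] at hz'
    · exact h x x.2 y' y'.2
    · simp [right] at hz
    · simp [right] at hz
  rw [sum_exchangeSnd, ← Finset.sum_add_sum_compl t w, ← Finset.sum_coe_sort t]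
  refine add_lt_add_left ?_ _
  simpa [right, u] using hlt

end Sum

variable {R M N κ : Type*} [CommRing R] [AddCommGroup M] [Module R M] [AddCommGroup N] [Module R N]

/-- The alternating map obtained from `f` by fixing the arguments outside `s` to the values of
`c`. -/
def fixOutside (f : M [⋀^ι]→ₗ[R] N) (s : Finset ι) (c : ι → M) : M [⋀^s]→ₗ[R] N :=
  { f.toMultilinearMap.domDomRestrict (· ∈ s) (fun i => c i) with
    map_eq_zero_of_eq' := fun v x y hxy hne =>
      f.map_eq_zero_of_eq _ (by simpa using hxy) (Subtype.coe_injective.ne hne) }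

theorem alternatingMap_eq_zero_of_card_lt [Fintype ι] [Fintype κ] (b : Module.Basis κ R M)
    (hcard : Fintype.card κ < Fintype.card ι) (f : M [⋀^ι]→ₗ[R] N) : f = 0 :=
  b.ext_alternating fun _ hv =>
    absurd (Fintype.card_le_of_injective _ hv) (not_le.2 hcard)

theorem mul'_summand_fixOutside (f g : M [⋀^ι]→ₗ[R] R) (v w : ι → M) (σ : Perm (s ⊕ t)) :
    LinearMap.mul' R R (AlternatingMap.domCoprod.summand (fixOutside f s v) (fixOutside g t w)
        (Quotient.mk'' σ) (Sum.elim (v ∘ (↑)) (w ∘ (↑)))) =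
      Perm.sign σ • (f (exchangeFst v w σ) * g (exchangeSnd v w σ)) := by
  rw [AlternatingMap.domCoprod.summand_mk'', _root_.smul_apply, map_zsmul_unit,
    MultilinearMap.domDomCongr_apply, MultilinearMap.domCoprod_apply]
  rfl

/-- The sum of the signed products over all redistributions modulo those preserving `s` and `t` is
an alternating function of `card s + card t` vectors, hence zero. -/
theorem mul_mem_of_forall_exchange_mem [Fintype κ] (b : Module.Basis κ R M)
    (hcard : Fintype.card κ < s.card + t.card) (f g : M [⋀^ι]→ₗ[R] R) (v w : ι → M)
    (H : AddSubgroup R)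
    (hH : ∀ σ : Perm (s ⊕ t), σ ∉ (Perm.sumCongrHom s t).range →
      f (exchangeFst v w σ) * g (exchangeSnd v w σ) ∈ H) :
    f v * g w ∈ H := by
  let F := fixOutside f s v
  let G := fixOutside g t w
  let u : s ⊕ t → M := Sum.elim (v ∘ (↑)) (w ∘ (↑))
  let term (q : Perm.ModSumCongr s t) : R :=
    LinearMap.mul' R R (AlternatingMap.domCoprod.summand F G q u)
  have hsum : ∑ q, term q = 0 := by
    have hFG : F.domCoprod G u = 0 := by
      rw [alternatingMap_eq_zero_of_card_lt b (by simpa using hcard) (F.domCoprod G)]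
      rfl
    rw [AlternatingMap.domCoprod_apply, _root_.sum_apply] at hFG
    rw [← map_sum, hFG, map_zero]
  have hone : term (Quotient.mk'' 1) = f v * g w := by
    simp only [term, u, F, G, mul'_summand_fixOutside, exchangeFst_one, exchangeSnd_one,
      Perm.sign_one, one_smul]
  rw [← Finset.add_sum_erase _ term (Finset.mem_univ (Quotient.mk'' 1)), hone] at hsum
  rw [eq_neg_of_add_eq_zero_left hsum]
  refine neg_mem (sum_mem fun q hq => ?_)
  induction q using Quotient.inductionOn' with | _ σ
  have hσ : σ ∉ (Perm.sumCongrHom s t).range := fun hσ =>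
    (Finset.mem_erase.1 hq).1 (Quotient.sound' (QuotientGroup.leftRel_apply.2 (by simpa using hσ)))
  simp only [term, u, F, G, mul'_summand_fixOutside, Units.smul_def]
  exact zsmul_mem (hH σ hσ) _

end Exchange

section Straightening

variable (R : Type*) [CommRing R] {p n k : ℕ}

/-- The minor `D_α` over an arbitrary ring of coefficients. -/
def genericMinor (α : Fin p → Fin n) : MvPolynomial (Fin p × Fin n) R :=
  ((Matrix.mvPolynomialX (Fin p) (Fin n) R).submatrix id α).det

/-- The product `D_{I₁}⋯D_{I_k}` of the minors on the columns of a tableau. -/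
def minorProd (I : Fin k → Fin p → Fin n) : MvPolynomial (Fin p × Fin n) R :=
  ∏ j, genericMinor R (I j)

theorem genericMinor_eq_detRowAlternating (α : Fin p → Fin n) :
    genericMinor R α =
      Matrix.detRowAlternating ((Matrix.mvPolynomialX (Fin p) (Fin n) R).col ∘ α) := by
  rw [genericMinor, ← Matrix.det_transpose]
  rfl

theorem genericMinor_eq_zero_of_not_injective {α : Fin p → Fin n} (hα : ¬ Function.Injective α) :
    genericMinor R α = 0 := by
  obtain ⟨i, j, hij, hne⟩ := Function.not_injective_iff.1 hα
  exact Matrix.det_zero_of_column_eq hne fun l => by simp [hij]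

theorem genericMinor_comp_perm (α : Fin p → Fin n) (σ : Equiv.Perm (Fin p)) :
    genericMinor R (α ∘ σ) = Equiv.Perm.sign σ • genericMinor R α := by
  rw [Units.smul_def, zsmul_eq_mul, genericMinor, genericMinor, ← Matrix.det_permute']
  rfl

variable {R}

/-- The positions `≤ a` of `β` and `≥ a` of `α` are `p + 1` in number, one more than the number of
rows. -/
theorem genericMinor_mul_mem_of_exchange (H : AddSubgroup (MvPolynomial (Fin p × Fin n) R))
    {α β : Fin p → Fin n} {a : Fin p} (hlt : ∀ i ≤ a, ∀ j ≥ a, β i < α j)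
    (hH : ∀ α' β' : Fin p → Fin n, ∑ i, (β' i : ℕ) + ∑ i, (α' i : ℕ) =
        ∑ i, (β i : ℕ) + ∑ i, (α i : ℕ) → ∑ i, (α' i : ℕ) < ∑ i, (α i : ℕ) →
      genericMinor R β' * genericMinor R α' ∈ H) :
    genericMinor R β * genericMinor R α ∈ H := by
  let entry : Fin n → ℕ := (↑)
  simp only [genericMinor_eq_detRowAlternating] at hH ⊢
  refine mul_mem_of_forall_exchange_mem (s := Finset.Iic a) (t := Finset.Ici a)
    (Pi.basisFun _ (Fin p)) ?_ _ _ _ _ H fun σ hσ => ?_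
  · simp only [Fintype.card_fin, Fin.card_Iic, Fin.card_Ici]
    omega
  · rw [exchangeFst_comp, exchangeSnd_comp]
    refine hH _ _ ?_ ?_
    · simpa only [exchangeFst_comp, exchangeSnd_comp, Function.comp_apply, entry] using
        sum_exchangeFst_add_sum_exchangeSnd (entry ∘ β) (entry ∘ α) σ
    · have hentry : ∀ i ∈ Finset.Iic a, ∀ j ∈ Finset.Ici a, (entry ∘ β) i < (entry ∘ α) j :=
        fun i hi j hj => hlt i (Finset.mem_Iic.1 hi) j (Finset.mem_Ici.1 hj)
      simpa only [exchangeSnd_comp, Function.comp_apply, entry] using sum_exchangeSnd_lt hentry hσ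

theorem minorProd_comp_perm_mem_iff (H : AddSubgroup (MvPolynomial (Fin p × Fin n) R))
    (I : Fin k → Fin p → Fin n) (σ : Fin k → Equiv.Perm (Fin p)) :
    minorProd R (fun j => I j ∘ σ j) ∈ H ↔ minorProd R I ∈ H := by
  have hsign : minorProd R (fun j => I j ∘ σ j) =
      (∏ j, Equiv.Perm.sign (σ j)) • minorProd R I := by
    simp only [minorProd, genericMinor_comp_perm, Units.smul_def, zsmul_eq_mul,
      Finset.prod_mul_distrib, Units.coe_prod, Int.cast_prod]
  rcases Int.units_eq_one_or (∏ j, Equiv.Perm.sign (σ j)) with h | h <;> simp [hsign, h]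

@[to_additive]
theorem prod_apply_update_update {ι β Γ : Type*} [Fintype ι] [DecidableEq ι] [CommMonoid Γ]
    {j j' : ι} (hj : j ≠ j') (F : ι → β → Γ) (I : ι → β) (x y : β) :
    ∏ i, F i (Function.update (Function.update I j x) j' y i) =
      F j x * F j' y * ∏ i ∈ {j, j'}ᶜ, F i (I i) := by
  rw [← Finset.prod_mul_prod_compl {j, j'}, Finset.prod_pair hj]
  congr 1
  · simp [hj]
  · refine Finset.prod_congr rfl fun i hi => ?_
    simp only [Finset.mem_compl, Finset.mem_insert, Finset.mem_singleton, not_or] at hi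
    simp [hi]

/-- The sum of the entries of a tableau, weighted by the index of their column. It grows when large
entries move to the right. -/
def tableauWeight (I : Fin k → Fin p → Fin n) : ℕ :=
  ∑ j : Fin k, (j : ℕ) * ∑ i, (I j i : ℕ)

theorem tableauWeight_lt_update_update {I : Fin k → Fin p → Fin n} {j j' : Fin k} (hj : j < j')
    {α β : Fin p → Fin n}
    (hsum : ∑ i, (β i : ℕ) + ∑ i, (α i : ℕ) = ∑ i, (I j' i : ℕ) + ∑ i, (I j i : ℕ))
    (hlt : ∑ i, (α i : ℕ) < ∑ i, (I j i : ℕ)) :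
    tableauWeight I < tableauWeight (Function.update (Function.update I j α) j' β) := by
  let F (l : Fin k) (γ : Fin p → Fin n) : ℕ := l * ∑ i, (γ i : ℕ)
  have hI := sum_apply_update_update hj.ne F I (I j) (I j')
  rw [Function.update_eq_self, Function.update_eq_self] at hI
  rw [tableauWeight, tableauWeight, hI, sum_apply_update_update hj.ne F]
  have : (j : ℕ) < j' := hj
  refine Nat.add_lt_add_right ?_ _
  simp only [F]
  nlinarith

theorem minorProd_mem_of_forall_weight_lt (H : Submodule R (MvPolynomial (Fin p × Fin n) R))
    {I : Fin k → Fin p → Fin n} (hI : ∀ j, StrictMono (I j)) (hmono : ¬ Monotone I)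
    (hH : ∀ K : Fin k → Fin p → Fin n, tableauWeight I < tableauWeight K → minorProd R K ∈ H) :
    minorProd R I ∈ H := by
  obtain ⟨j, j', hjj', a, ha⟩ : ∃ j j', j ≤ j' ∧ ∃ a, I j' a < I j a := by
    simpa only [Monotone, Pi.le_def, not_forall, not_le, exists_prop] using hmono
  have hj : j < j' := hjj'.lt_of_ne (by rintro rfl; exact ha.false)
  let rest := ∏ i ∈ {j, j'}ᶜ, genericMinor R (I i)
  have hprod (α β : Fin p → Fin n) :
      minorProd R (Function.update (Function.update I j α) j' β) =
        genericMinor R β * genericMinor R α * rest := by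
    rw [minorProd, prod_apply_update_update hj.ne fun _ => genericMinor R,
      mul_comm (genericMinor R β)]
  have hexch := genericMinor_mul_mem_of_exchange
    (H.comap (LinearMap.mulRight R rest)).toAddSubgroup (α := I j) (β := I j') (a := a)
    (fun x hx y hy => ((hI j').monotone hx).trans_lt (ha.trans_le ((hI j).monotone hy)))
    fun α β hsum hlt => by
      simpa [hprod] using hH _ (tableauWeight_lt_update_update hj hsum hlt)
  simpa [← hprod] using hexch

/-- The semistandard tableaux with `k` strictly increasing columns. -/
def stdTableaux (p n k : ℕ) : Set (Fin k → Fin p → Fin n) :=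
  {I | (∀ j, StrictMono (I j)) ∧ Monotone I}

/-- Among the tableaux violating the claim, one of largest weight could be straightened. -/
theorem minorProd_mem_span_stdTableaux (I : Fin k → Fin p → Fin n) :
    minorProd R I ∈ Submodule.span R (minorProd R '' stdTableaux p n k) := by
  set S := Submodule.span R (minorProd R '' stdTableaux p n k)
  by_contra hbad
  obtain ⟨J, hJ, hmax⟩ := Set.exists_max_image {J | minorProd R J ∉ S} tableauWeight
    (Set.toFinite _) ⟨I, hbad⟩
  have hinj (j : Fin k) : Function.Injective (J j) := by
    by_contra hj
    refine hJ ?_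
    rw [minorProd, Finset.prod_eq_zero (Finset.mem_univ j)
      (genericMinor_eq_zero_of_not_injective R hj)]
    exact zero_mem S
  let K (j : Fin k) : Fin p → Fin n := J j ∘ Tuple.sort (J j)
  have hK (j : Fin k) : StrictMono (K j) :=
    (Tuple.monotone_sort (J j)).strictMono_of_injective ((hinj j).comp (Equiv.injective _))
  have hKS : minorProd R K ∉ S :=
    fun h => hJ ((minorProd_comp_perm_mem_iff S.toAddSubgroup J _).1 h)
  have hweight : tableauWeight K = tableauWeight J :=
    Finset.sum_congr rfl fun j _ =>
      congrArg _ (Equiv.sum_comp (Tuple.sort (J j)) fun i => (J j i : ℕ))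
  by_cases hmono : Monotone K
  · exact hKS (Submodule.subset_span ⟨K, ⟨hK, hmono⟩, rfl⟩)
  · refine hKS (minorProd_mem_of_forall_weight_lt S hK hmono fun L hL => ?_)
    by_contra hLS
    exact (hmax L hLS).not_gt (hweight ▸ hL)

end Straightening

section PBWColumns

variable {p n : ℕ}

/-- The PBW-semistandard tableaux with `k` columns. -/
def pbwTableaux (p n k : ℕ) : Set (Fin k → Fin p → Fin n) :=
  {I | (∀ j, IsPBW p n (I j)) ∧ ∀ i j, i ≤ j → pbwLeFin p n (I i) (I j)}

/-- The PBW tuple whose suffix maxima are `m`, for `m` weakly decreasing with values `≥ p - 1`: each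
value `≥ p` of `m` is put in the last position where `m` takes it, and the remaining positions hold
their own index. -/
def pbwColumn (hpn : p ≤ n) (m : Fin p → Fin n) : Fin p → Fin n := fun k =>
  if p ≤ m k ∧ ∀ l, k < l → m l < m k then m k else k.castLE hpn

theorem pbwLeFin_iff_forall_exists {α β : Fin p → Fin n} :
    pbwLeFin p n α β ↔ ∀ k y, (∃ l ≥ k, y ≤ α l) → ∃ l ≥ k, y ≤ β l := by
  refine ⟨fun h k y ⟨l, hl, hy⟩ => ?_, fun h k => h k (α k) ⟨k, le_rfl, le_rfl⟩⟩
  obtain ⟨l', hl', hle⟩ := h l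
  exact ⟨l', hl.trans hl', hy.trans hle⟩

theorem pbwColumn_cases (hpn : p ≤ n) (m : Fin p → Fin n) (k : Fin p) :
    (p ≤ m k ∧ (∀ l, k < l → m l < m k) ∧ pbwColumn hpn m k = m k) ∨
      pbwColumn hpn m k = k.castLE hpn := by
  by_cases h : p ≤ m k ∧ ∀ l, k < l → m l < m k
  · exact Or.inl ⟨h.1, h.2, if_pos h⟩
  · exact Or.inr (if_neg h)

theorem isPBW_pbwColumn (hpn : p ≤ n) {m : Fin p → Fin n} (hm : Antitone m) :
    IsPBW p n (pbwColumn hpn m) := by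
  refine ⟨fun k l hkl => ?_, fun k hk => ?_, fun k l hl hlt => ?_⟩
  · rcases pbwColumn_cases hpn m k with ⟨hk, hk', ek⟩ | ek <;>
      rcases pbwColumn_cases hpn m l with ⟨hl, hl', el⟩ | el <;> rw [ek, el] at hkl
    · rcases lt_trichotomy k l with h | h | h
      · exact absurd hkl (hk' l h).ne'
      · exact h
      · exact absurd hkl (hl' k h).ne
    · exact absurd hk (by simp [hkl])
    · exact absurd hl (by simp [← hkl])
    · exact Fin.castLE_injective hpn hkl
  · rcases pbwColumn_cases hpn m k with ⟨h, -, ek⟩ | ek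
    · exact absurd hk (ek ▸ h.not_gt)
    · rw [ek, Fin.val_castLE]
  · have el : pbwColumn hpn m l = m l := by
      rcases pbwColumn_cases hpn m l with ⟨-, -, el⟩ | el
      · exact el
      · exact absurd hl (by simp [el])
    rcases pbwColumn_cases hpn m k with ⟨-, -, ek⟩ | ek
    · rw [ek, el] at hlt
      exact hm.reflect_lt hlt
    · rw [ek, Fin.val_castLE] at hlt
      omega

theorem exists_le_pbwColumn_iff (hpn : p ≤ n) {m : Fin p → Fin n} (hm : Antitone m)
    (hp : ∀ k, p ≤ m k + 1) (k : Fin p) (y : Fin n) :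
    (∃ l ≥ k, y ≤ pbwColumn hpn m l) ↔ y ≤ m k := by
  constructor
  · rintro ⟨l, hl, hy⟩
    rcases pbwColumn_cases hpn m l with ⟨-, -, el⟩ | el
    · exact hy.trans (el ▸ hm hl)
    · have hlk : (l : ℕ) ≤ m k := by have := hp k; omega
      exact hy.trans (el ▸ hlk)
  · intro hy
    by_cases hk : p ≤ (m k : ℕ)
    · obtain ⟨l, hl, hml, hmax⟩ := (Set.toFinite {l | m l = m k}).exists_le_maximal rfl
      have hlt (l' : Fin p) (h : l < l') : m l' < m l :=
        (hm h.le).lt_of_ne fun h' => h.not_ge (hmax (h'.trans hml) h.le)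
      refine ⟨l, hl, hy.trans ?_⟩
      rw [pbwColumn, if_pos ⟨hml ▸ hk, hlt⟩, hml]
    · have hm_eq : (m k : ℕ) = p - 1 := by have := hp k; omega
      let last : Fin p := ⟨p - 1, Nat.sub_one_lt_of_lt k.2⟩
      have hlast : pbwColumn hpn m last = last.castLE hpn := by
        refine if_neg fun h => hk (h.1.trans (hm ?_))
        exact Fin.le_def.2 (Nat.le_sub_one_of_lt k.2)
      exact ⟨last, Nat.le_sub_one_of_lt k.2, hlast ▸ hy.trans (Fin.le_def.2 hm_eq.le)⟩

theorem pbwLeFin_pbwColumn_iff (hpn : p ≤ n) {m m' : Fin p → Fin n} (hm : Antitone m)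
    (hm' : Antitone m') (hp : ∀ k, p ≤ m k + 1) (hp' : ∀ k, p ≤ m' k + 1) :
    pbwLeFin p n (pbwColumn hpn m) (pbwColumn hpn m') ↔ m ≤ m' := by
  simp only [pbwLeFin_iff_forall_exists, exists_le_pbwColumn_iff hpn hm hp,
    exists_le_pbwColumn_iff hpn hm' hp']
  exact forall_congr' fun k => forall_le_iff_le

theorem sub_le_apply_sub_apply_of_strictMono {α : Fin p → Fin n} (hα : StrictMono α)
    (x y : Fin p) : (y : ℕ) - x ≤ α y - α x := by
  rw [← Fin.card_Ioc, ← Fin.card_Ioc]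
  refine Finset.card_le_card_of_injOn α (fun i hi => ?_) hα.injective.injOn
  rw [Finset.mem_coe, Finset.mem_Ioc] at hi ⊢
  exact ⟨hα hi.1, hα.monotone hi.2⟩

theorem apply_rev_add_lt_of_strictMono {α : Fin p → Fin n} (hα : StrictMono α) (k : Fin p) :
    α k.rev + (k : ℕ) < n := by
  let last : Fin p := ⟨p - 1, Nat.sub_one_lt_of_lt k.2⟩
  have hgap := sub_le_apply_sub_apply_of_strictMono hα k.rev last
  simp only [Fin.val_rev, last] at hgap
  omega

/-- The suffix maxima of the PBW tuple corresponding to an increasing tuple `α`: the entries of `α`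
in reverse order, shifted so as to be merely weakly decreasing. -/
def suffixMaxima {α : Fin p → Fin n} (hα : StrictMono α) (k : Fin p) : Fin n :=
  ⟨α k.rev + k, apply_rev_add_lt_of_strictMono hα k⟩

theorem antitone_suffixMaxima {α : Fin p → Fin n} (hα : StrictMono α) :
    Antitone (suffixMaxima hα) := by
  intro k l hkl
  have hgap := sub_le_apply_sub_apply_of_strictMono hα l.rev k.rev
  have hle : α l.rev ≤ α k.rev := hα.monotone (Fin.rev_le_rev.2 hkl)
  simp only [suffixMaxima, Fin.le_def, Fin.val_rev] at hgap hle ⊢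
  omega

theorem le_suffixMaxima_add_one {α : Fin p → Fin n} (hα : StrictMono α) (k : Fin p) :
    p ≤ suffixMaxima hα k + 1 := by
  have hgap := sub_le_apply_sub_apply_of_strictMono hα ⟨0, k.pos⟩ k.rev
  simp only [suffixMaxima, Fin.val_rev] at hgap ⊢
  omega

theorem suffixMaxima_le_suffixMaxima_iff {α β : Fin p → Fin n} (hα : StrictMono α)
    (hβ : StrictMono β) : suffixMaxima hα ≤ suffixMaxima hβ ↔ α ≤ β := by
  rw [Pi.le_def, Pi.le_def, ← Fin.revPerm.forall_congr_right]
  simp [suffixMaxima]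

theorem le_of_strictMono_fin {α : Fin p → Fin n} (hα : StrictMono α) : p ≤ n := by
  simpa using Fintype.card_le_of_injective α hα.injective

/-- Sending each column `α` to `pbwColumn (suffixMaxima α)` reflects and preserves the order, so it
embeds the semistandard tableaux into the PBW-semistandard ones. -/
theorem card_stdTableaux_le_card_pbwTableaux (p n k : ℕ) :
    Fintype.card (stdTableaux p n k) ≤ Fintype.card (pbwTableaux p n k) := by
  let col (α : {α : Fin p → Fin n // StrictMono α}) : Fin p → Fin n :=
    pbwColumn (le_of_strictMono_fin α.2) (suffixMaxima α.2)
  have hcol (α β) : pbwLeFin p n (col α) (col β) ↔ α ≤ β := by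
    rw [pbwLeFin_pbwColumn_iff _ (antitone_suffixMaxima _) (antitone_suffixMaxima _)
      (le_suffixMaxima_add_one _) (le_suffixMaxima_add_one _), suffixMaxima_le_suffixMaxima_iff,
      Subtype.coe_le_coe]
  have hinj : Function.Injective col := fun α β h =>
    le_antisymm ((hcol α β).1 (h ▸ (hcol α α).2 le_rfl)) ((hcol β α).1 (h ▸ (hcol β β).2 le_rfl))
  refine Fintype.card_le_of_injective
    (fun I => ⟨fun j => col ⟨I.1 j, I.2.1 j⟩, fun j => isPBW_pbwColumn _ (antitone_suffixMaxima _),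
      fun i j hij => (hcol _ _).2 (I.2.2 hij)⟩) fun I J h => ?_
  have hIJ (j : Fin k) : col ⟨I.1 j, I.2.1 j⟩ = col ⟨J.1 j, J.2.1 j⟩ :=
    congrFun (congrArg Subtype.val h) j
  exact Subtype.ext (funext fun j => congrArg Subtype.val (hinj (hIJ j)))

end PBWColumns

section LeadingMonomials

open scoped MonomialOrder

section LinearIndependent

variable {R σ ι : Type*} [CommRing R] [NoZeroDivisors R]

theorem linearIndependent_of_injective_degree (m : MonomialOrder σ) {f : ι → MvPolynomial σ R}
    (hf : ∀ i, f i ≠ 0) (hdeg : Function.Injective fun i => m.degree (f i)) :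
    LinearIndependent R f := by
  rw [linearIndependent_iff']
  intro s c hsum
  by_contra! hc
  obtain ⟨i₀, hi₀, hc₀⟩ := hc
  obtain ⟨i, hi, hmax⟩ := Finset.exists_max_image (s.filter (c · ≠ 0))
    (fun i => m.toSyn (m.degree (f i))) ⟨i₀, Finset.mem_filter.2 ⟨hi₀, hc₀⟩⟩
  rw [Finset.mem_filter] at hi
  have hcoeff : (∑ j ∈ s, c j • f j).coeff (m.degree (f i)) = c i * m.leadingCoeff (f i) := by
    rw [coeff_sum, Finset.sum_eq_single_of_mem i hi.1 fun j hj hji => ?_]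
    · rfl
    · by_cases hcj : c j = 0
      · simp [hcj]
      · have hlt : m.toSyn (m.degree (f j)) < m.toSyn (m.degree (f i)) :=
          (hmax j (Finset.mem_filter.2 ⟨hj, hcj⟩)).lt_of_ne
            (m.toSyn.injective.ne (hdeg.ne hji))
        rw [coeff_smul, m.coeff_eq_zero_of_lt hlt, smul_zero]
  rw [hsum, coeff_zero] at hcoeff
  exact mul_ne_zero hi.2 (m.leadingCoeff_ne_zero_iff.2 (hf i)) hcoeff.symm

end LinearIndependent

section LexOrder

variable {σ τ : Type*} [Finite σ] [LinearOrder τ]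

/-- The lexicographic monomial order for the linear order of the variables induced by an injective
key, variables with smaller keys being more significant. -/
def lexOrderOfInjective (key : σ → τ) (hkey : Function.Injective key) : MonomialOrder σ :=
  letI := LinearOrder.lift' key hkey
  MonomialOrder.lex

theorem lexOrderOfInjective_lt {key : σ → τ} (hkey : Function.Injective key) {c d : σ →₀ ℕ}
    (z : σ) (hz : c z < d z) (h : ∀ w, key w < key z → c w = d w) :
    c ≺[lexOrderOfInjective key hkey] d :=
  letI := LinearOrder.lift' key hkey
  MonomialOrder.lex_lt_iff.2 (Finsupp.Lex.lt_iff.2 ⟨z, h, hz⟩)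

end LexOrder

/-- The position of the variable `z_{i,x}`: rows from top to bottom, and within row `i` in the order
`z_{i,i}, z_{i,n-1}, z_{i,n-2}, …`. -/
def pbwKey (p n : ℕ) (z : Fin p × Fin n) : Fin p ×ₗ ℕ :=
  toLex (z.1, if (z.2 : ℕ) = z.1 then 0 else n - z.2)

theorem pbwKey_injective (p n : ℕ) : Function.Injective (pbwKey p n) := by
  rintro ⟨i, x⟩ ⟨j, y⟩ h
  simp only [pbwKey, EmbeddingLike.apply_eq_iff_eq, Prod.mk.injEq] at h ⊢
  obtain ⟨rfl, h⟩ := h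
  refine ⟨rfl, Fin.ext ?_⟩
  split_ifs at h <;> omega

/-- The monomial order for which the leading term of the minor of a PBW tuple is its diagonal
term. -/
def pbwOrder (p n : ℕ) : MonomialOrder (Fin p × Fin n) :=
  lexOrderOfInjective (pbwKey p n) (pbwKey_injective p n)

variable {p n : ℕ}

/-- The exponent of the diagonal monomial `z_{1,α₁} ⋯ z_{p,α_p}`. -/
def columnExponent (α : Fin p → Fin n) : Fin p × Fin n →₀ ℕ :=
  ∑ i, Finsupp.single (i, α i) 1

theorem columnExponent_apply (α : Fin p → Fin n) (i : Fin p) (x : Fin n) :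
    columnExponent α (i, x) = if α i = x then 1 else 0 := by
  simp only [columnExponent, Finsupp.finsetSum_apply, Finsupp.single_apply, Prod.mk.injEq]
  rw [Finset.sum_eq_single i (by simp +contextual) (by simp)]
  simp

theorem columnExponent_injective : Function.Injective (columnExponent : (Fin p → Fin n) → _) := by
  intro α β h
  ext1 i
  have := columnExponent_apply α i (β i)
  rw [h, columnExponent_apply, if_pos rfl] at this
  by_contra hne
  simp [hne] at this

theorem degree_columnExponent (α : Fin p → Fin n) : (columnExponent α).degree = p := by
  simp [columnExponent, map_sum]

variable {R : Type*} [CommRing R]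

theorem prod_X_eq_monomial_columnExponent (α : Fin p → Fin n) :
    (∏ i, X (i, α i) : MvPolynomial (Fin p × Fin n) R) = monomial (columnExponent α) 1 := by
  simp only [columnExponent, X, monomial_sum_one]

theorem genericMinor_eq_sum (α : Fin p → Fin n) :
    genericMinor R α =
      ∑ σ : Equiv.Perm (Fin p), Equiv.Perm.sign σ • monomial (columnExponent (α ∘ σ)) 1 := by
  rw [genericMinor, ← Matrix.det_transpose, Matrix.det_apply]
  simp only [← prod_X_eq_monomial_columnExponent]
  rfl

theorem coeff_genericMinor_columnExponent {α : Fin p → Fin n} (hα : Function.Injective α) :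
    (genericMinor R α).coeff (columnExponent α) = 1 := by
  simp only [genericMinor_eq_sum, coeff_sum, Units.smul_def, coeff_smul, coeff_monomial,
    columnExponent_injective.eq_iff]
  rw [Finset.sum_eq_single 1]
  · simp
  · intro σ _ hσ
    rw [if_neg, smul_zero]
    exact fun h => hσ (Equiv.ext fun i => hα (congrFun h i))
  · simp

theorem exists_comp_perm_of_mem_support_genericMinor {α : Fin p → Fin n} {d : Fin p × Fin n →₀ ℕ}
    (hd : d ∈ (genericMinor R α).support) :
    ∃ σ : Equiv.Perm (Fin p), columnExponent (α ∘ σ) = d := by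
  by_contra! hne
  refine mem_support_iff.1 hd ?_
  simp only [genericMinor_eq_sum, coeff_sum, Units.smul_def, coeff_smul, coeff_monomial]
  exact Finset.sum_eq_zero fun σ _ => by rw [if_neg (hne σ), smul_zero]

theorem pbwKey_lt_of_isPBW {α : Fin p → Fin n} (hα : IsPBW p n α) {i j : Fin p} (hij : i < j) :
    pbwKey p n (i, α i) < pbwKey p n (i, α j) := by
  obtain ⟨hinj, hlow, hhigh⟩ := hα
  have hne : (α i : ℕ) ≠ α j := Fin.val_ne_of_ne (hinj.ne hij.ne)
  have hi := hlow i
  have hj := hlow j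
  have hji := hhigh j i
  simp only [pbwKey, Prod.Lex.toLex_lt_toLex]
  refine Or.inr ⟨trivial, ?_⟩
  split_ifs <;> omega

/-- The first row `i` moved by `σ` decides the comparison: there `z_{i,α_i}` precedes the variable
`z_{i,α_σ(i)}`. -/
theorem columnExponent_comp_lt {α : Fin p → Fin n} (hα : IsPBW p n α) {σ : Equiv.Perm (Fin p)}
    (hσ : σ ≠ 1) : columnExponent (α ∘ σ) ≺[pbwOrder p n] columnExponent α := by
  obtain ⟨i, hi, hmin⟩ := WellFounded.has_min wellFounded_lt {i | σ i ≠ i}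
    (by simpa [Set.Nonempty, Equiv.ext_iff] using hσ)
  have hfix (l : Fin p) (hl : l < i) : σ l = l := not_not.1 fun h => hmin l h hl
  have hgt : i < σ i := by
    by_contra! h
    exact hi (σ.injective (hfix _ (h.lt_of_ne hi)))
  refine lexOrderOfInjective_lt _ (i, α i) ?_ ?_
  · simp [columnExponent_apply, hα.1.eq_iff, hgt.ne']
  · rintro ⟨l, x⟩ hkey
    rcases Prod.Lex.toLex_lt_toLex.1 hkey with hl | ⟨hl, -⟩
    · simp only [columnExponent_apply, Function.comp_apply, hfix l hl]
    · obtain rfl : l = i := hl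
      have hx : α l ≠ x := by rintro rfl; exact hkey.false
      have hx' : α (σ l) ≠ x := by rintro rfl; exact (hkey.trans (pbwKey_lt_of_isPBW hα hgt)).false
      simp only [columnExponent_apply, Function.comp_apply, hx, hx', if_false]

theorem degree_genericMinor [Nontrivial R] {α : Fin p → Fin n} (hα : IsPBW p n α) :
    (pbwOrder p n).degree (genericMinor R α) = columnExponent α := by
  apply (pbwOrder p n).toSyn.injective
  refine le_antisymm (MonomialOrder.degree_le_iff.2 fun d hd => ?_) (MonomialOrder.le_degree ?_)
  · obtain ⟨σ, rfl⟩ := exists_comp_perm_of_mem_support_genericMinor hd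
    obtain rfl | hσ := eq_or_ne σ 1
    · exact le_rfl
    · exact (columnExponent_comp_lt hα hσ).le
  · rw [mem_support_iff, coeff_genericMinor_columnExponent hα.1]
    exact one_ne_zero

end LeadingMonomials

section Uniqueness

variable {p n k : ℕ}

theorem lt_of_isPBW_of_le {α : Fin p → Fin n} (hα : IsPBW p n α) {i l : Fin p} (hi : p ≤ α i)
    (hil : i < l) : α l < α i :=
  (not_lt.1 fun h => hil.not_gt (hα.2.2 l i hi h)).lt_of_ne (Fin.val_ne_of_ne (hα.1.ne hil.ne'))

theorem isUpperSet_setOf_exists_le {I : Fin k → Fin p → Fin n} (hI : I ∈ pbwTableaux p n k)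
    (i : Fin p) (y : Fin n) : IsUpperSet {j | ∃ l ≥ i, y ≤ I j l} :=
  fun j j' hjj' hj => pbwLeFin_iff_forall_exists.1 (hI.2 j j' hjj') i y hj

theorem apply_eq_of_apply_eq_of_agree {α β : Fin p → Fin n} (hα : IsPBW p n α) {i : Fin p}
    (hrows : ∀ l > i, α l = β l) {y : Fin n} (hy : p ≤ y) (habove : ∀ z > y, β i = z → α i = z)
    (hmax : (∃ l ≥ i, y ≤ α l) → ∃ l ≥ i, y ≤ β l) (hi : α i = y) : β i = y := by
  obtain ⟨l, hil, hyl⟩ := hmax ⟨i, le_rfl, hi.ge⟩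
  obtain rfl | hil : i = l ∨ i < l := hil.eq_or_lt
  · refine hyl.antisymm' (not_lt.1 fun h => ?_)
    exact h.ne (hi.symm.trans (habove _ h rfl))
  · have hlt : α l < α i := lt_of_isPBW_of_le hα (hi ▸ hy) hil
    exact absurd hyl (not_le.2 (hrows l hil ▸ hi ▸ hlt))

theorem eq_of_isPBW_of_forall_le {α β : Fin p → Fin n} (hα : IsPBW p n α) (hβ : IsPBW p n β)
    {i : Fin p} (h : ∀ y : Fin n, p ≤ y → (α i = y ↔ β i = y)) : α i = β i := by
  by_cases hαi : p ≤ (α i : ℕ)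
  · exact ((h _ hαi).1 rfl).symm
  by_cases hβi : p ≤ (β i : ℕ)
  · exact (h _ hβi).2 rfl
  · exact Fin.ext ((hα.2.1 i (not_le.1 hαi)).trans (hβ.2.1 i (not_le.1 hβi)).symm)

theorem card_filter_eq_of_sum_columnExponent_eq {ι : Type*} [Fintype ι] {I J : ι → Fin p → Fin n}
    (h : ∑ j, columnExponent (I j) = ∑ j, columnExponent (J j)) (i : Fin p) (y : Fin n) :
    Finset.card {j | I j i = y} = Finset.card {j | J j i = y} := by
  simpa [Finsupp.finsetSum_apply, columnExponent_apply] using DFunLike.congr_fun h (i, y)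

/-- Of the columns of `I` and of `J` in which an entry `≥ y` occurs from row `i` on, those of one
tableau contain those of the other, as both form upper sets. -/
theorem apply_eq_iff_of_agree {I J : Fin k → Fin p → Fin n} (hI : I ∈ pbwTableaux p n k)
    (hJ : J ∈ pbwTableaux p n k) {i : Fin p} {y : Fin n} (hy : p ≤ y)
    (hcard : Finset.card {j | I j i = y} = Finset.card {j | J j i = y})
    (hrows : ∀ l > i, ∀ j, I j l = J j l) (habove : ∀ z > y, ∀ j, I j i = z ↔ J j i = z)
    (j : Fin k) : I j i = y ↔ J j i = y := by
  wlog hsub : {j | ∃ l ≥ i, y ≤ I j l} ⊆ {j | ∃ l ≥ i, y ≤ J j l} generalizing I J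
  · have hsub' := ((isUpperSet_setOf_exists_le hI i y).total
      (isUpperSet_setOf_exists_le hJ i y)).resolve_left hsub
    exact (this hJ hI hcard.symm (fun l hl j => (hrows l hl j).symm)
      (fun z hz j => (habove z hz j).symm) hsub').symm
  have hfiber : Finset.filter (fun j => I j i = y) Finset.univ =
      Finset.filter (fun j => J j i = y) Finset.univ := by
    refine Finset.eq_of_subset_of_card_le (fun j hj => ?_) hcard.ge
    rw [Finset.mem_filter_univ] at hj ⊢
    exact apply_eq_of_apply_eq_of_agree (hI.1 j) (fun l hl => hrows l hl j) hy
      (fun z hz => (habove z hz j).2) (fun h => hsub h) hj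
  simpa using Finset.ext_iff.1 hfiber j

theorem eq_of_sum_columnExponent_eq {I J : Fin k → Fin p → Fin n} (hI : I ∈ pbwTableaux p n k)
    (hJ : J ∈ pbwTableaux p n k)
    (h : ∑ j, columnExponent (I j) = ∑ j, columnExponent (J j)) : I = J := by
  suffices hrow : ∀ i j, I j i = J j i from funext fun j => funext fun i => hrow i j
  intro i
  induction i using WellFoundedGT.induction with | _ i hrows
  suffices hentry : ∀ y : Fin n, p ≤ y → ∀ j, I j i = y ↔ J j i = y from
    fun j => eq_of_isPBW_of_forall_le (hI.1 j) (hJ.1 j) fun y hy => hentry y hy j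
  intro y
  induction y using WellFoundedGT.induction with | _ y habove
  intro hy
  exact apply_eq_iff_of_agree hI hJ hy (card_filter_eq_of_sum_columnExponent_eq h i y) hrows
    fun z hz => habove z hz (hy.trans hz.le)

end Uniqueness

section Basis

variable {p n : ℕ}

theorem genericMinor_ne_zero {R : Type*} [CommRing R] [Nontrivial R] {α : Fin p → Fin n}
    (hα : Function.Injective α) : genericMinor R α ≠ 0 := fun h => by
  simpa [h] using coeff_genericMinor_columnExponent (R := R) hα

section Domain

variable (R : Type*) [CommRing R] [IsDomain R]

theorem degree_minorProd {k : ℕ} {I : Fin k → Fin p → Fin n} (hI : I ∈ pbwTableaux p n k) :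
    (pbwOrder p n).degree (minorProd R I) = ∑ j, columnExponent (I j) := by
  rw [minorProd, MonomialOrder.degree_prod fun j _ => genericMinor_ne_zero (hI.1 j).1]
  exact Finset.sum_congr rfl fun j _ => degree_genericMinor (hI.1 j)

theorem linearIndependent_minorProd_pbwTableaux (hp : 1 ≤ p) :
    LinearIndependent R fun T : Σ k, pbwTableaux p n k => minorProd R T.2.1 := by
  refine linearIndependent_of_injective_degree (pbwOrder p n)
    (fun T => Finset.prod_ne_zero_iff.2 fun j _ => genericMinor_ne_zero (T.2.2.1 j).1) ?_
  rintro ⟨k, I, hI⟩ ⟨l, J, hJ⟩ h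
  simp only [degree_minorProd R hI, degree_minorProd R hJ] at h
  obtain rfl : k = l := by
    have hkl := congrArg Finsupp.degree h
    simp only [map_sum, degree_columnExponent, Finset.sum_const, Finset.card_univ,
      Fintype.card_fin, smul_eq_mul] at hkl
    exact Nat.eq_of_mul_eq_mul_right hp hkl
  obtain rfl := eq_of_sum_columnExponent_eq hI hJ h
  rfl

end Domain

/-- The Plücker algebra `𝒫` over an arbitrary field of coefficients. -/
def plueckerAlgebra (K : Type*) [Field K] (p n : ℕ) :
    Subalgebra K (MvPolynomial (Fin p × Fin n) K) :=
  Algebra.adjoin K (Set.range (genericMinor K))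

/-- The products of the minors on the columns of the PBW-semistandard tableaux. -/
def pbwMinorProds (K : Type*) [Field K] (p n : ℕ) : Set (MvPolynomial (Fin p × Fin n) K) :=
  Set.range fun T : Σ k, pbwTableaux p n k => minorProd K T.2.1

variable {K : Type*} [Field K]

/-- The semistandard products span a space of dimension at most their number, which the independent
PBW-semistandard products contained in it attain. -/
theorem span_pbwTableaux_eq_span_stdTableaux (hp : 1 ≤ p) (k : ℕ) :
    Submodule.span K (minorProd K '' pbwTableaux p n k) =
      Submodule.span K (minorProd K '' stdTableaux p n k) := by
  have hfin : FiniteDimensional K (Submodule.span K (minorProd K '' stdTableaux p n k)) :=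
    FiniteDimensional.span_of_finite K (Set.toFinite _)
  have hli : LinearIndependent K fun I : pbwTableaux p n k => minorProd K I.1 :=
    (linearIndependent_minorProd_pbwTableaux K hp).comp (Sigma.mk k) sigma_mk_injective
  refine Submodule.eq_of_le_of_finrank_le (Submodule.span_le.2 ?_) ?_
  · rintro _ ⟨I, -, rfl⟩
    exact minorProd_mem_span_stdTableaux I
  · rw [Set.image_eq_range, Set.image_eq_range, finrank_span_eq_card hli]
    exact (finrank_range_le_card _).trans (card_stdTableaux_le_card_pbwTableaux p n k)

theorem minorProd_mem_span_pbwMinorProds (hp : 1 ≤ p) {k : ℕ} (I : Fin k → Fin p → Fin n) :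
    minorProd K I ∈ Submodule.span K (pbwMinorProds K p n) := by
  have hsub : minorProd K '' pbwTableaux p n k ⊆ pbwMinorProds K p n := by
    rintro _ ⟨J, hJ, rfl⟩
    exact ⟨⟨k, J, hJ⟩, rfl⟩
  refine Submodule.span_mono hsub ?_
  rw [span_pbwTableaux_eq_span_stdTableaux hp]
  exact minorProd_mem_span_stdTableaux I

theorem minorProd_mem_plueckerAlgebra {k : ℕ} (I : Fin k → Fin p → Fin n) :
    minorProd K I ∈ plueckerAlgebra K p n :=
  prod_mem fun j _ => Algebra.subset_adjoin ⟨I j, rfl⟩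

theorem exists_minorProd_eq_of_mem_closure {f : MvPolynomial (Fin p × Fin n) K}
    (hf : f ∈ Submonoid.closure (Set.range (genericMinor K))) :
    ∃ (k : ℕ) (I : Fin k → Fin p → Fin n), minorProd K I = f := by
  obtain ⟨l, hl, rfl⟩ := Submonoid.exists_list_of_mem_closure hf
  choose I hI using fun j : Fin l.length => hl (l.get j) (List.get_mem l j)
  exact ⟨_, I, by simp only [minorProd, hI, List.get_eq_getElem, Fin.prod_univ_getElem]⟩

theorem statement8_general (hp : 1 ≤ p) :
    LinearIndependent K (fun f : pbwMinorProds K p n => (f : MvPolynomial (Fin p × Fin n) K)) ∧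
      Submodule.span K (pbwMinorProds K p n) = Subalgebra.toSubmodule (plueckerAlgebra K p n) := by
  refine ⟨(linearIndependent_minorProd_pbwTableaux K hp).linearIndepOn_id,
    le_antisymm (Submodule.span_le.2 ?_) ?_⟩
  · rintro _ ⟨T, rfl⟩
    exact minorProd_mem_plueckerAlgebra T.2.1
  · rw [plueckerAlgebra, Algebra.adjoin_eq_span]
    refine Submodule.span_le.2 fun f hf => ?_
    obtain ⟨k, I, rfl⟩ := exists_minorProd_eq_of_mem_closure hf
    exact minorProd_mem_span_pbwMinorProds hp I

end Basis

theorem pbwProducts_eq_pbwMinorProds (p n : ℕ) : pbwProducts p n = pbwMinorProds ℂ p n := by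
  ext f
  constructor
  · rintro ⟨k, I, hI, hle, rfl⟩
    exact ⟨⟨k, I, hI, hle⟩, rfl⟩
  · rintro ⟨⟨k, I, hI, hle⟩, rfl⟩
    exact ⟨k, I, hI, hle, rfl⟩

/-- The products `D_{I₁}⋯D_{I_k}` over PBW-semistandard Young
tableaux with columns `I₁,…,I_k` form a ℂ-basis of the Plücker algebra `𝒫`. -/
theorem statement8 (p n : ℕ) (hp : 1 ≤ p) (hpn : p < n) :
    LinearIndependent ℂ
        (fun f : pbwProducts p n => (f : MvPolynomial (Fin p × Fin n) ℂ)) ∧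
      Submodule.span ℂ (pbwProducts p n) = Subalgebra.toSubmodule (Pluecker p n) := by
  rw [pbwProducts_eq_pbwMinorProds]
  exact statement8_general hp
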